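/- arXiv:2403.10676 — 4 statements merged into one kernel-verified Lean document; each statement's English description precedes it below -/
import Mathlib

section
/- Let T ≥ 2, τ ∈ {1,…,T}, z ∈ {1,…,τ−1}, α ∈ [0,1]. Suppose the file F and shares M_1,…,M_T satisfy recoverability, (α,z)-privacy, and leakage symmetry. Then for every t ∈ {1,…,T}, H(M_t) ≥ ((1−α)/(τ−z))·H(F). -/
/-!
For a server `t` and a set `S` of servers not containing `t`, adding the share `M_t` to `M_S`
raises the leakage `I(F ; M_S)` by at most `H(M_t)`: this only uses subadditivity
`H(M_S, M_t) ≤ H(M_S) + H(M_t)` (`ent_pair_le`) and monotonicity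
`H(F, M_S) ≤ H(F, M_S, M_t)` (`ent_comp_le`); see `mutInf_insert_le`.
By leakage symmetry the leakage depends only on the number of servers, so for each
`k = z, …, τ - 1` the leakage of `k + 1` servers exceeds that of `k` servers by at most
`H(M_t)`, for the *same* `t`: since `k < T`, there is a `k`-set avoiding `t`.
Telescoping from `z` servers (leakage at most `α H(F)`) to `τ` servers (leakage `H(F)`, by
recoverability) gives `(1 - α) H(F) ≤ (τ - z) H(M_t)`.
-/

open scoped BigOperators
open Classical

noncomputable section

/-- Probability of an event `A` under the probability mass function `p` on a finite
sample space `Ω`. -/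
def prb {Ω : Type} [Fintype Ω] (p : Ω → ℝ) (A : Set Ω) : ℝ :=
  ∑ ω, if ω ∈ A then p ω else 0

/-- Shannon entropy (in bits, base-2 logarithm) of a random variable `X` defined on a
finite sample space with probability mass function `p`, with the convention
`0 * log 0 = 0`. -/
def ent {Ω V : Type} [Fintype Ω] [Fintype V] (p : Ω → ℝ) (X : Ω → V) : ℝ :=
  -∑ v, prb p {ω | X ω = v} * Real.logb 2 (prb p {ω | X ω = v})

/-- Conditional Shannon entropy `H(X | Y) = H(X, Y) - H(Y)`. -/
def condEnt {Ω V W : Type} [Fintype Ω] [Fintype V] [Fintype W]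
    (p : Ω → ℝ) (X : Ω → V) (Y : Ω → W) : ℝ :=
  ent p (fun ω => (X ω, Y ω)) - ent p Y

/-- Mutual information `I(X ; Y) = H(X) + H(Y) - H(X, Y)`. -/
def mutInf {Ω V W : Type} [Fintype Ω] [Fintype V] [Fintype W]
    (p : Ω → ℝ) (X : Ω → V) (Y : Ω → W) : ℝ :=
  ent p X + ent p Y - ent p (fun ω => (X ω, Y ω))

/-- The tuple of shares `M_S = (M_t)_{t ∈ S}` viewed as a single random variable. -/
def shares {Ω : Type} {T : ℕ} {χ : Fin T → Type} (M : ∀ t, Ω → χ t)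
    (S : Finset (Fin T)) : Ω → (∀ t : S, χ t.1) :=
  fun ω t => M t.1 ω

lemma prb_nonneg {Ω : Type} [Fintype Ω] {p : Ω → ℝ} (hp0 : ∀ ω, 0 ≤ p ω) (A : Set Ω) :
    0 ≤ prb p A :=
  Finset.sum_nonneg fun ω _ => by split_ifs <;> simp [hp0]

lemma prb_mono {Ω : Type} [Fintype Ω] {p : Ω → ℝ} (hp0 : ∀ ω, 0 ≤ p ω) {A B : Set Ω}
    (h : A ⊆ B) : prb p A ≤ prb p B := by
  refine Finset.sum_le_sum fun ω _ => ?_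
  by_cases hA : ω ∈ A
  · simp [hA, h hA]
  · rw [if_neg hA]
    split_ifs <;> simp [hp0]

lemma le_prb {Ω : Type} [Fintype Ω] {p : Ω → ℝ} (hp0 : ∀ ω, 0 ≤ p ω) {A : Set Ω} {ω : Ω}
    (h : ω ∈ A) : p ω ≤ prb p A := by
  have := Finset.single_le_sum (f := fun ω => if ω ∈ A then p ω else 0)
    (fun ω _ => by split_ifs <;> simp [hp0]) (Finset.mem_univ ω)
  simpa [prb, h] using this

/-- The expectation of `f(X)`, computed on the sample space or from the law of `X`. -/
lemma sum_mul_comp {Ω V : Type} [Fintype Ω] [Fintype V] (p : Ω → ℝ) (X : Ω → V) (f : V → ℝ) :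
    ∑ ω, p ω * f (X ω) = ∑ v, prb p {ω | X ω = v} * f v := by
  simp only [prb, Finset.sum_mul]
  rw [Finset.sum_comm]
  refine Finset.sum_congr rfl fun ω _ => ?_
  simp [ite_mul]

lemma sum_prb {Ω V : Type} [Fintype Ω] [Fintype V] (p : Ω → ℝ) (X : Ω → V) :
    ∑ v, prb p {ω | X ω = v} = ∑ ω, p ω := by
  simpa using (sum_mul_comp p X fun _ => 1).symm

/-- Entropy as the expected surprisal, a sum over the sample space. Sums for different random
variables can then be compared term by term. -/
lemma ent_eq_sum {Ω V : Type} [Fintype Ω] [Fintype V] (p : Ω → ℝ) (X : Ω → V) :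
    ent p X = -∑ ω, p ω * Real.logb 2 (prb p {ω' | X ω' = X ω}) := by
  rw [ent, sum_mul_comp p X fun v => Real.logb 2 (prb p {ω' | X ω' = v})]

lemma ent_comp_le {Ω V W : Type} [Fintype Ω] [Fintype V] [Fintype W] {p : Ω → ℝ}
    (hp0 : ∀ ω, 0 ≤ p ω) (X : Ω → V) (g : V → W) :
    ent p (fun ω => g (X ω)) ≤ ent p X := by
  rw [ent_eq_sum, ent_eq_sum]
  refine neg_le_neg (Finset.sum_le_sum fun ω _ => ?_)
  rcases (hp0 ω).eq_or_lt with h | h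
  · simp [← h]
  · refine mul_le_mul_of_nonneg_left ?_ h.le
    have hpos : 0 < prb p {ω' | X ω' = X ω} := h.trans_le (le_prb hp0 rfl)
    refine Real.logb_le_logb_of_le one_lt_two hpos (prb_mono hp0 fun ω' h' => ?_)
    exact congrArg g h'

lemma ent_pair_le {Ω V W : Type} [Fintype Ω] [Fintype V] [Fintype W] {p : Ω → ℝ}
    (hp0 : ∀ ω, 0 ≤ p ω) (hp1 : ∑ ω, p ω = 1) (X : Ω → V) (Y : Ω → W) :
    ent p (fun ω => (X ω, Y ω)) ≤ ent p X + ent p Y := by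
  let P : V → ℝ := fun v => prb p {ω | X ω = v}
  let Q : W → ℝ := fun w => prb p {ω | Y ω = w}
  let R : V × W → ℝ := fun u => prb p {ω | (X ω, Y ω) = u}
  have hlog2 : 0 < Real.log 2 := Real.log_pos one_lt_two
  -- The Gibbs inequality, from `log x ≤ x - 1` at `x = P Q / R`.
  have key : ∑ ω, p ω * (Real.log (P (X ω)) + Real.log (Q (Y ω)) - Real.log (R (X ω, Y ω)))
      ≤ ∑ ω, p ω * (P (X ω) * Q (Y ω) / R (X ω, Y ω) - 1) := by
    refine Finset.sum_le_sum fun ω _ => ?_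
    rcases (hp0 ω).eq_or_lt with h | h
    · simp [← h]
    · have hP : 0 < P (X ω) := h.trans_le (le_prb hp0 rfl)
      have hQ : 0 < Q (Y ω) := h.trans_le (le_prb hp0 rfl)
      have hR : 0 < R (X ω, Y ω) := h.trans_le (le_prb hp0 rfl)
      refine mul_le_mul_of_nonneg_left ?_ h.le
      rw [← Real.log_mul hP.ne' hQ.ne', ← Real.log_div (by positivity) hR.ne']
      exact Real.log_le_sub_one_of_pos (by positivity)
  have hle : ∑ ω, p ω * (P (X ω) * Q (Y ω) / R (X ω, Y ω)) ≤ 1 := by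
    rw [sum_mul_comp p (fun ω => (X ω, Y ω)) fun u => P u.1 * Q u.2 / R u]
    calc ∑ u, R u * (P u.1 * Q u.2 / R u) ≤ ∑ u : V × W, P u.1 * Q u.2 := by
          refine Finset.sum_le_sum fun u _ => ?_
          have hPQ : 0 ≤ P u.1 * Q u.2 := mul_nonneg (prb_nonneg hp0 _) (prb_nonneg hp0 _)
          by_cases hR : R u = 0
          · simpa [hR] using hPQ
          · rw [mul_div_cancel₀ _ hR]
      _ = (∑ v, P v) * ∑ w, Q w := by rw [Finset.sum_mul_sum, Fintype.sum_prod_type]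
      _ = 1 := by simp only [P, Q, sum_prb, hp1, mul_one]
  have hsum : ∑ ω, p ω * (P (X ω) * Q (Y ω) / R (X ω, Y ω) - 1) ≤ 0 := by
    simp only [mul_sub, mul_one, Finset.sum_sub_distrib, hp1]
    linarith
  have hid : ent p (fun ω => (X ω, Y ω)) - (ent p X + ent p Y) =
      (∑ ω, p ω * (Real.log (P (X ω)) + Real.log (Q (Y ω)) - Real.log (R (X ω, Y ω))))
        / Real.log 2 := by
    simp only [ent_eq_sum, Real.logb, P, Q, R, mul_sub, mul_add, Finset.sum_sub_distrib,
      Finset.sum_add_distrib, ← mul_div_assoc, ← Finset.sum_div]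
    ring
  have := div_nonpos_of_nonpos_of_nonneg (key.trans hsum) hlog2.le
  linarith

lemma mutInf_insert_le {Ω : Type} [Fintype Ω] {p : Ω → ℝ}
    (hp0 : ∀ ω, 0 ≤ p ω) (hp1 : ∑ ω, p ω = 1) {T : ℕ}
    {𝔽 : Type} [Fintype 𝔽] (F : Ω → 𝔽)
    {χ : Fin T → Type} [∀ t, Fintype (χ t)] (M : ∀ t, Ω → χ t)
    (S : Finset (Fin T)) (t : Fin T) :
    mutInf p F (shares M (insert t S)) ≤ mutInf p F (shares M S) + ent p (M t) := by
  -- `M_{S ∪ {t}}` is a function of the pair `(M_S, M_t)`.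
  let g : (∀ i : S, χ i.1) × χ t → ∀ i : (insert t S : Finset (Fin T)), χ i.1 := fun u i =>
    if h : i.1 = t then cast (congrArg χ h.symm) u.2
    else u.1 ⟨i.1, (Finset.mem_insert.1 i.2).resolve_left h⟩
  have hg : shares M (insert t S) = fun ω => g (shares M S ω, M t ω) := by
    funext ω i
    obtain ⟨i, hi⟩ := i
    by_cases h : i = t
    · subst h
      simp [g, shares]
    · simp [g, shares, h]
  have h1 : ent p (shares M (insert t S)) ≤ ent p (shares M S) + ent p (M t) := by
    rw [hg]
    exact (ent_comp_le hp0 _ g).trans (ent_pair_le hp0 hp1 _ _)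
  have h2 : ent p (fun ω => (F ω, shares M S ω)) ≤
      ent p (fun ω => (F ω, shares M (insert t S) ω)) :=
    ent_comp_le hp0 (fun ω => (F ω, shares M (insert t S) ω))
      (fun u => (u.1, fun i : S => u.2 ⟨i.1, Finset.mem_insert_of_mem i.2⟩))
  unfold mutInf
  linarith

/-- Under recoverability, `(α, z)`-privacy, and leakage symmetry,
every individual share satisfies `H(M_t) ≥ ((1 - α) / (τ - z)) · H(F)`. -/
theorem individual_share_lower_bound_privacy
    {Ω : Type} [Fintype Ω] (p : Ω → ℝ)
    (hp0 : ∀ ω, 0 ≤ p ω) (hp1 : ∑ ω, p ω = 1)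
    {T : ℕ} (hT : 2 ≤ T) {τ z : ℕ} (hτ1 : 1 ≤ τ) (hτT : τ ≤ T)
    (hz1 : 1 ≤ z) (hzτ : z < τ)
    {α : ℝ} (hα0 : 0 ≤ α) (hα1 : α ≤ 1)
    {𝔽 : Type} [Fintype 𝔽] (F : Ω → 𝔽) (hF : 0 < ent p F)
    {χ : Fin T → Type} [∀ t, Fintype (χ t)] (M : ∀ t, Ω → χ t)
    (hrec : ∀ S : Finset (Fin T), τ ≤ S.card → condEnt p F (shares M S) = 0)
    (hpriv : ∀ S : Finset (Fin T), S.Nonempty → S.card ≤ z →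
      mutInf p F (shares M S) ≤ α * ent p F)
    (hsym : ∀ t : ℕ, 1 ≤ t → t ≤ T → ∃ C : ℝ, 0 ≤ C ∧
      ∀ S : Finset (Fin T), S.card = t → mutInf p F (shares M S) = C * ent p F) :
    ∀ t : Fin T, ent p (M t) ≥ ((1 - α) / ((τ : ℝ) - (z : ℝ))) * ent p F := by
  intro t
  have hex : ∀ k, k < T → ∃ S : Finset (Fin T), t ∉ S ∧ S.card = k := fun k hk => by
    obtain ⟨S, hS, hc⟩ := Finset.exists_subset_card_eq
      (s := Finset.univ.erase t) (n := k) (by simp; omega)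
    exact ⟨S, fun h => by simpa using hS h, hc⟩
  choose! C _ hC using hsym
  have step : ∀ k, 1 ≤ k → k < T → C (k + 1) * ent p F ≤ C k * ent p F + ent p (M t) := by
    intro k hk1 hkT
    obtain ⟨S, htS, hc⟩ := hex k hkT
    rw [← hC k hk1 hkT.le S hc, ← hC (k + 1) (by omega) hkT (insert t S)
      (by rw [Finset.card_insert_of_notMem htS, hc])]
    exact mutInf_insert_le hp0 hp1 F M S t
  have telescope : ∀ d, z + d ≤ T → C (z + d) * ent p F ≤ C z * ent p F + d * ent p (M t) := by
    intro d
    induction d with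
    | zero => simp
    | succ d ih =>
      intro hd
      have h1 := ih (by omega)
      have h2 := step (z + d) (by omega) (by omega)
      rw [← add_assoc]
      push_cast
      linarith
  have hCz : C z * ent p F ≤ α * ent p F := by
    obtain ⟨S, -, hc⟩ := hex z (by omega)
    rw [← hC z hz1 (by omega) S hc]
    exact hpriv S (Finset.card_pos.1 (by omega)) hc.le
  have hCτ : C τ * ent p F = ent p F := by
    obtain ⟨S, -, hc⟩ := Finset.exists_subset_card_eq
      (s := (Finset.univ : Finset (Fin T))) (n := τ) (by simpa using hτT)
    have h := hrec S hc.ge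
    rw [← hC τ hτ1 hτT S hc]
    unfold condEnt at h
    unfold mutInf
    linarith
  have hfin := telescope (τ - z) (by omega)
  rw [Nat.add_sub_of_le hzτ.le, Nat.cast_sub hzτ.le] at hfin
  have hpos : (0 : ℝ) < τ - z := sub_pos.2 (by exact_mod_cast hzτ)
  rw [ge_iff_le, div_mul_eq_mul_div, div_le_iff₀ hpos]
  linarith

end
end

section
/- Let T ≥ 2 and τ ∈ {1,…,T}. Suppose the file F and shares M_1,…,M_T satisfy recoverability with threshold τ (no privacy or symmetry assumption is needed). Then Σ_{t=1}^{T} H(M_t) ≥ (T/τ)·H(F). -/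
/-!
Any `τ` shares determine the file, so `H(F) ≤ H(F, M_S) = H(M_S) ≤ ∑_{t ∈ S} H(M_t)` for every
`S` with `|S| = τ`. Summing this over the `T` cyclic windows `S = {i, i+1, …, i+τ-1}` of `ℤ/T`
counts every server exactly `τ` times, whence `T · H(F) ≤ τ · ∑_t H(M_t)`.

The entropy facts used are monotonicity under functions (`ent_le_of_factor`) and subadditivity
(`ent_pair_le`). Both follow from writing `H(X) = -∑_ω p(ω) log₂ P(X = X(ω))` (`ent_eq_sum`);
subadditivity then reduces to `log x ≤ x - 1` applied to `P(X)P(Y)/P(X,Y)`.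
-/

open scoped BigOperators
open Classical

noncomputable section

/-- Change of variables: the expectation of `g(X)` computed from the law of `X`. -/
lemma sum_prb_mul {Ω V : Type} [Fintype Ω] [Fintype V] (p : Ω → ℝ) (X : Ω → V) (g : V → ℝ) :
    ∑ v, prb p {ω | X ω = v} * g v = ∑ ω, p ω * g (X ω) := by
  simp only [prb, Finset.sum_mul, Set.mem_ofPred_eq]
  rw [Finset.sum_comm]
  refine Finset.sum_congr rfl fun ω _ => ?_
  simp

/-- If `Y` is a function of `X` then `H(Y) ≤ H(X)`. -/
lemma ent_le_of_factor {Ω V W : Type} [Fintype Ω] [Fintype V] [Fintype W] {p : Ω → ℝ}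
    (hp0 : ∀ ω, 0 ≤ p ω) (X : Ω → V) (Y : Ω → W)
    (h : ∀ ω ω', X ω = X ω' → Y ω = Y ω') : ent p Y ≤ ent p X := by
  rw [ent_eq_sum, ent_eq_sum, neg_le_neg_iff]
  refine Finset.sum_le_sum fun ω _ => ?_
  rcases (hp0 ω).eq_or_lt with h0 | h0
  · simp [← h0]
  · refine mul_le_mul_of_nonneg_left ?_ h0.le
    exact Real.logb_le_logb_of_le one_lt_two
      (h0.trans_le (le_prb hp0 (by simp))) (prb_mono hp0 fun ω' hω' => h _ _ hω')

/-- Subadditivity for tuples: `H(M_S) ≤ ∑_{t ∈ S} H(M_t)`. -/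
lemma ent_shares_le {Ω : Type} [Fintype Ω] {p : Ω → ℝ}
    (hp0 : ∀ ω, 0 ≤ p ω) (hp1 : ∑ ω, p ω = 1) {T : ℕ} {χ : Fin T → Type}
    [∀ t, Fintype (χ t)] (M : ∀ t, Ω → χ t) (S : Finset (Fin T)) :
    ent p (shares M S) ≤ ∑ t ∈ S, ent p (M t) := by
  induction S using Finset.induction_on with
  | empty =>
    have h : ∀ ω, prb p {ω' | shares M ∅ ω' = shares M ∅ ω} = 1 := by
      intro ω
      have : ∀ ω', shares M ∅ ω' = shares M ∅ ω := fun ω' => by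
        funext t
        exact absurd t.2 (Finset.notMem_empty _)
      simp [prb, this, hp1]
    simp [ent_eq_sum, h]
  | insert t S ht ih =>
    rw [Finset.sum_insert ht]
    have h1 : ent p (shares M (insert t S)) ≤ ent p (fun ω => (M t ω, shares M S ω)) := by
      refine ent_le_of_factor hp0 _ _ fun ω ω' h => ?_
      obtain ⟨h1, h2⟩ := Prod.mk.inj h
      funext ⟨s, hs⟩
      rcases Finset.mem_insert.1 hs with rfl | hs
      · exact h1
      · exact congrFun h2 ⟨s, hs⟩
    have h2 := ent_pair_le hp0 hp1 (M t) (shares M S)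
    linarith

/-- Under recoverability with threshold `τ` alone, the sum of the
share entropies satisfies `Σ_t H(M_t) ≥ (T / τ) · H(F)`. -/
theorem sum_share_lower_bound_reconstruction
    {Ω : Type} [Fintype Ω] (p : Ω → ℝ)
    (hp0 : ∀ ω, 0 ≤ p ω) (hp1 : ∑ ω, p ω = 1)
    {T : ℕ} (hT : 2 ≤ T) {τ : ℕ} (hτ1 : 1 ≤ τ) (hτT : τ ≤ T)
    {𝔽 : Type} [Fintype 𝔽] (F : Ω → 𝔽) (hF : 0 < ent p F)
    {χ : Fin T → Type} [∀ t, Fintype (χ t)] (M : ∀ t, Ω → χ t)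
    (hrec : ∀ S : Finset (Fin T), τ ≤ S.card → condEnt p F (shares M S) = 0) :
    ∑ t : Fin T, ent p (M t) ≥ ((T : ℝ) / (τ : ℝ)) * ent p F := by
  have hS : ∀ S : Finset (Fin T), τ ≤ S.card → ent p F ≤ ∑ t ∈ S, ent p (M t) := by
    intro S hS
    have h1 : ent p F ≤ ent p (fun ω => (F ω, shares M S ω)) :=
      ent_le_of_factor hp0 _ _ fun ω ω' h => (Prod.mk.inj h).1
    have h2 := hrec S hS
    have h3 := ent_shares_le hp0 hp1 M S
    rw [condEnt] at h2
    linarith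
  have : NeZero T := ⟨by omega⟩
  -- The cyclic window `{i, …, i + τ - 1}`, with addition in `Fin T` taken modulo `T`.
  have hwin : ∀ i : Fin T, ent p F ≤ ∑ j : Fin τ, ent p (M (i + Fin.castLE hτT j)) := by
    intro i
    have hinj : Function.Injective fun j : Fin τ => i + Fin.castLE hτT j :=
      (add_right_injective i).comp (Fin.castLE_injective hτT)
    have := hS (Finset.univ.map ⟨_, hinj⟩) (by simp)
    simpa using this
  have hsum := Finset.sum_le_sum fun i (_ : i ∈ Finset.univ) => hwin i
  rw [Finset.sum_comm] at hsum
  have hshift : ∀ j : Fin τ, ∑ i, ent p (M (i + Fin.castLE hτT j)) = ∑ t, ent p (M t) :=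
    fun j => Equiv.sum_comp (Equiv.addRight (Fin.castLE hτT j)) fun t => ent p (M t)
  simp only [hshift, Finset.sum_const, Finset.card_univ, Fintype.card_fin, nsmul_eq_mul] at hsum
  have hτ : (0 : ℝ) < τ := by exact_mod_cast hτ1
  rw [ge_iff_le, div_mul_eq_mul_div, div_le_iff₀ hτ]
  linarith

end
end

section
/- (Existence and properties of linear ramp secret sharing.) Let K be a finite field, let T ≥ 2 and 1 ≤ L ≤ τ ≤ T with |K| > T, and let x_1,…,x_T be distinct nonzero elements of K. Let A_0,…,A_{τ−1} be independent random variables, each uniformly distributed on K; set F = (A_0,…,A_{L−1}) (the secret), R = (A_L,…,A_{τ−1}) (the randomness), and for t ∈ {1,…,T} let M_t = Σ_{j=0}^{τ−1} A_j·x_t^j. Then: (i) for every S ⊆ {1,…,T} with |S| ≥ τ, H(F | M_S) = 0; (ii) for every S ⊆ {1,…,T} with |S| ≤ τ, I(F; M_S) = max(0, |S| − (τ−L))·log₂|K|; in particular I(F; M_S) = 0 whenever |S| ≤ τ−L, I(F; M_S)/H(F) = max(0, |S| − (τ−L))/L depends only on |S|, H(F) = L·log₂|K|, H(R) = (τ−L)·log₂|K|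 = ((τ−L)/L)·H(F), and H(M_t) = log₂|K| = H(F)/L for every t. -/
/-!
Every random variable in the statement is a linear image of the coefficient vector
`(A_0, …, A_{τ-1})`, which is uniform on `K ^ τ`. A surjective additive image of a uniform
variable is uniform on its codomain (`ent_surjective`), and an injective image has the
entropy of the original variable (`ent_injective`), so each entropy is `log₂` of a
cardinality.

The map sending the coefficients of a polynomial `P` of degree `< τ` to its first `l`
coefficients and its values on `S` (`coeffEval`) has full rank `min (l + |S|) τ`. If
`l + |S| ≥ τ` it is injective: an element of the kernel is divisible by the coprime
polynomials `X ^ l` and `∏ (X - x_t)`, whose product has degree `l + |S|`. If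
`l + |S| ≤ τ` it is surjective, being a projection of the map for `τ - |S|` in place of `l`,
which is injective between sets of equal size.
-/

open scoped BigOperators
open Classical

noncomputable section

section Entropy

variable {Ω V W : Type} [Fintype Ω] [Fintype V]

/-- The law of a function of a uniform variable is given by the sizes of the fibres. -/
lemma prb_comp (p : Ω → ℝ) (B : Ω → V)
    (hB : ∀ a, prb p {ω | B ω = a} = 1 / (Fintype.card V : ℝ)) (φ : V → W) (v : W) :
    prb p {ω | φ (B ω) = v} =
      ((Finset.univ.filter fun a => φ a = v).card : ℝ) / (Fintype.card V : ℝ) := by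
  have h1 : prb p {ω | φ (B ω) = v} =
      ∑ a ∈ Finset.univ.filter (fun a => φ a = v), prb p {ω | B ω = a} := by
    unfold prb
    rw [Finset.sum_comm]
    refine Finset.sum_congr rfl fun ω _ => ?_
    simp [Finset.sum_ite_eq]
  rw [h1, Finset.sum_congr rfl fun a _ => hB a]
  simp [div_eq_mul_inv]

variable [Fintype W]

lemma ent_uniform [Nonempty W] (p : Ω → ℝ) (X : Ω → W)
    (hX : ∀ a, prb p {ω | X ω = a} = 1 / (Fintype.card W : ℝ)) :
    ent p X = Real.logb 2 (Fintype.card W) := by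
  have : (Fintype.card W : ℝ) ≠ 0 := by exact_mod_cast Fintype.card_ne_zero
  unfold ent
  simp only [hX]
  simp [Real.logb_inv, this]

lemma ent_injective [Nonempty V] (p : Ω → ℝ) (B : Ω → V)
    (hB : ∀ a, prb p {ω | B ω = a} = 1 / (Fintype.card V : ℝ)) (φ : V → W)
    (hφ : Function.Injective φ) :
    ent p (fun ω => φ (B ω)) = Real.logb 2 (Fintype.card V) := by
  rw [← ent_uniform p B hB]
  unfold ent
  congr 1
  symm
  -- Outside the range of `φ` the summand is `0 * logb 2 0 = 0`.
  refine Finset.sum_of_injOn φ hφ.injOn (by simp) ?_ ?_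
  · intro v _ hv
    have : {ω | φ (B ω) = v} = ∅ := by
      ext ω
      simp only [Set.mem_ofPred_eq, Set.mem_empty_iff_false, iff_false]
      intro h
      exact hv ⟨B ω, by simp, h⟩
    simp [this, prb]
  · intro a _
    simp [hφ.eq_iff]

lemma ent_surjective [AddGroup V] [AddGroup W] (p : Ω → ℝ) (B : Ω → V)
    (hB : ∀ a, prb p {ω | B ω = a} = 1 / (Fintype.card V : ℝ)) (φ : V →+ W)
    (hφ : Function.Surjective φ) :
    ent p (fun ω => φ (B ω)) = Real.logb 2 (Fintype.card W) := by
  apply ent_uniform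
  intro w
  rw [prb_comp p B hB]
  -- All fibres are translates of the kernel, so `|V| = |W| * |fibre|`.
  have hfib : ∀ w', (Finset.univ.filter fun a => φ a = w').card =
      (Finset.univ.filter fun a => φ a = w).card :=
    fun w' => AddMonoidHom.card_fiber_eq_of_mem_range φ (hφ w') (hφ w)
  have hcard : Fintype.card V =
      Fintype.card W * (Finset.univ.filter fun a => φ a = w).card := by
    rw [← Finset.card_univ, Finset.card_eq_sum_card_fiberwise
      (f := φ) (t := Finset.univ) (by simp)]
    simp [hfib]
  have hV : (Fintype.card V : ℝ) ≠ 0 := by exact_mod_cast Fintype.card_ne_zero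
  have hW : (Fintype.card W : ℝ) ≠ 0 := by exact_mod_cast Fintype.card_ne_zero
  rw [div_eq_div_iff hV hW, hcard]
  push_cast
  ring

end Entropy

section Vandermonde

variable {K : Type} [Field K] {T τ : ℕ}

/-- Evaluation at the points `x t`, `t ∈ S`, of the polynomial with coefficients `a`. -/
def evalMap (τ : ℕ) (x : Fin T → K) (S : Finset (Fin T)) :
    (Fin τ → K) →+ (S → K) where
  toFun a t := ∑ j : Fin τ, a j * x t.1 ^ (j : ℕ)
  map_zero' := by ext; simp
  map_add' a b := by ext; simp [add_mul, Finset.sum_add_distrib]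

/-- The first `l` entries of a coefficient vector. -/
def coeffMap (K : Type) [Field K] {l τ : ℕ} (hl : l ≤ τ) : (Fin τ → K) →+ (Fin l → K) where
  toFun a j := a (Fin.castLE hl j)
  map_zero' := by ext; simp
  map_add' a b := by ext; simp

/-- The first `l` coefficients of a polynomial of degree `< τ` together with its values at
the points indexed by `S`. -/
def coeffEval {l : ℕ} (hl : l ≤ τ) (x : Fin T → K) (S : Finset (Fin T)) :
    (Fin τ → K) →+ (Fin l → K) × (S → K) :=
  (coeffMap K hl).prod (evalMap τ x S)

lemma coeffEval_injective {l : ℕ} (hl : l ≤ τ) (x : Fin T → K)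
    (hxinj : Function.Injective x) (hx0 : ∀ t, x t ≠ 0) (S : Finset (Fin T))
    (hS : τ ≤ l + S.card) : Function.Injective (coeffEval hl x S) := by
  rw [injective_iff_map_eq_zero]
  intro a ha
  obtain ⟨h1, h2⟩ := Prod.ext_iff.mp ha
  set P : Polynomial K := ∑ j : Fin τ, Polynomial.C (a j) * Polynomial.X ^ (j : ℕ) with hP
  have hcoeff : ∀ j : Fin τ, P.coeff j = a j := by
    intro j
    simp [hP, Polynomial.finsetSum_coeff, Polynomial.coeff_C_mul, Polynomial.coeff_X_pow,
      Fin.val_inj]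
  have hdeg : P.degree < (τ : WithBot ℕ) := by
    rw [hP]
    exact Polynomial.degree_sum_fin_lt a
  have hX : Polynomial.X ^ l ∣ P := by
    rw [Polynomial.X_pow_dvd_iff]
    intro d hd
    have := congrFun h1 ⟨d, hd⟩
    rw [← Fin.val_mk (hd.trans_le hl), hcoeff]
    exact this
  have hprod : (∏ t ∈ S, (Polynomial.X - Polynomial.C (x t))) ∣ P := by
    apply Finset.prod_dvd_of_coprime
    · intro s _ t _ hst
      exact Polynomial.pairwise_coprime_X_sub_C hxinj hst
    · intro t ht
      rw [Polynomial.dvd_iff_isRoot, Polynomial.IsRoot, hP, Polynomial.eval_finsetSum]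
      have := congrFun h2 ⟨t, ht⟩
      simpa [coeffEval, evalMap] using this
  have hcop : IsCoprime (Polynomial.X ^ l : Polynomial K)
      (∏ t ∈ S, (Polynomial.X - Polynomial.C (x t))) := by
    apply IsCoprime.pow_left
    apply IsCoprime.prod_right
    intro t _
    have := Polynomial.isCoprime_X_sub_C_of_isUnit_sub (a := (0 : K)) (b := x t)
      (by simpa using hx0 t)
    simpa using this
  have hP0 : P = 0 := by
    refine Polynomial.eq_zero_of_dvd_of_degree_lt (hcop.mul_dvd hX hprod) (hdeg.trans_le ?_)
    rw [Polynomial.degree_mul, Polynomial.degree_X_pow, Polynomial.degree_prod]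
    simp only [Polynomial.degree_X_sub_C, Finset.sum_const, nsmul_eq_mul, mul_one]
    exact_mod_cast hS
  ext j
  rw [← hcoeff, hP0]
  simp

lemma coeffEval_surjective [Fintype K] {l : ℕ} (hl : l ≤ τ) (x : Fin T → K)
    (hxinj : Function.Injective x) (hx0 : ∀ t, x t ≠ 0) (S : Finset (Fin T))
    (hS : l + S.card ≤ τ) : Function.Surjective (coeffEval hl x S) := by
  have hl' : τ - S.card ≤ τ := Nat.sub_le _ _
  have hbij : Function.Bijective (coeffEval hl' x S) := by
    rw [Fintype.bijective_iff_injective_and_card]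
    refine ⟨coeffEval_injective hl' x hxinj hx0 S (by omega), ?_⟩
    simp only [Fintype.card_prod, Fintype.card_fun, Fintype.card_fin, Fintype.card_coe,
      ← pow_add]
    congr 1
    omega
  rintro ⟨f, m⟩
  -- Pad the prescribed first `l` coefficients by zeros up to length `τ - |S|`.
  obtain ⟨a, ha⟩ := hbij.2 (fun j => if h : (j : ℕ) < l then f ⟨j, h⟩ else 0, m)
  obtain ⟨h1, h2⟩ := Prod.ext_iff.mp ha
  refine ⟨a, Prod.ext ?_ h2⟩
  ext j
  have := congrFun h1 ⟨j, by omega⟩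
  simp only [j.2, dif_pos] at this
  exact this

lemma evalMap_injective (x : Fin T → K) (hxinj : Function.Injective x)
    (hx0 : ∀ t, x t ≠ 0) (S : Finset (Fin T)) (hS : τ ≤ S.card) :
    Function.Injective (evalMap τ x S) := by
  intro a b hab
  refine coeffEval_injective (Nat.zero_le τ) x hxinj hx0 S (by omega) (Prod.ext ?_ hab)
  ext j
  exact j.elim0

lemma evalMap_surjective [Fintype K] (x : Fin T → K) (hxinj : Function.Injective x)
    (hx0 : ∀ t, x t ≠ 0) (S : Finset (Fin T)) (hS : S.card ≤ τ) :
    Function.Surjective (evalMap τ x S) :=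
  Prod.snd_surjective.comp
    (coeffEval_surjective (Nat.zero_le τ) x hxinj hx0 S (by omega))

end Vandermonde

/-- Existence and properties of linear ramp secret sharing: with
`A_0, …, A_{τ-1}` i.i.d. uniform on a finite field `K` with `|K| > T`, secret
`F = (A_0, …, A_{L-1})`, randomness `R = (A_L, …, A_{τ-1})`, and shares
`M_t = Σ_j A_j x_t^j` at distinct nonzero evaluation points `x_1, …, x_T`:
(i) any `τ` shares determine `F`; (ii) any `S` with `|S| ≤ τ` leaks exactly
`max(0, |S| - (τ - L)) · log₂|K|` bits about `F`; in particular the leakage is zero for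
`|S| ≤ τ - L` and the normalized leakage depends only on `|S|`; moreover
`H(F) = L·log₂|K|`, `H(R) = (τ-L)·log₂|K| = ((τ-L)/L)·H(F)`, and
`H(M_t) = log₂|K| = H(F)/L` for every `t`. -/
theorem linear_ramp_secret_sharing_properties
    {Ω : Type} [Fintype Ω] (p : Ω → ℝ)
    (hp0 : ∀ ω, 0 ≤ p ω) (hp1 : ∑ ω, p ω = 1)
    (K : Type) [Field K] [Fintype K]
    {T τ L : ℕ} (hT : 2 ≤ T) (hL1 : 1 ≤ L) (hLτ : L ≤ τ) (hτT : τ ≤ T)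
    (hK : T < Fintype.card K)
    (x : Fin T → K) (hxinj : Function.Injective x) (hx0 : ∀ t, x t ≠ 0)
    (A : Fin τ → Ω → K)
    (hunif : ∀ (j : Fin τ) (k : K),
      prb p {ω | A j ω = k} = 1 / (Fintype.card K : ℝ))
    (hindep : ∀ a : Fin τ → K,
      prb p {ω | ∀ j, A j ω = a j} = ∏ j, prb p {ω | A j ω = a j})
    (F : Ω → (Fin L → K))
    (hFdef : ∀ ω (j : Fin L), F ω j = A (Fin.castLE hLτ j) ω)
    (R : Ω → (Fin (τ - L) → K))
    (hRdef : ∀ ω (j : Fin (τ - L)),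
      R ω j = A (Fin.cast (Nat.add_sub_cancel' hLτ) (Fin.natAdd L j)) ω)
    (M : Fin T → Ω → K)
    (hMdef : ∀ t ω, M t ω = ∑ j : Fin τ, A j ω * x t ^ (j : ℕ)) :
    (∀ S : Finset (Fin T), τ ≤ S.card → condEnt p F (shares M S) = 0) ∧
    (∀ S : Finset (Fin T), S.card ≤ τ → mutInf p F (shares M S) =
      max 0 ((S.card : ℝ) - ((τ : ℝ) - (L : ℝ))) * Real.logb 2 (Fintype.card K)) ∧
    (∀ S : Finset (Fin T), S.card ≤ τ - L → mutInf p F (shares M S) = 0) ∧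
    (∀ S : Finset (Fin T), S.card ≤ τ → mutInf p F (shares M S) / ent p F =
      max 0 ((S.card : ℝ) - ((τ : ℝ) - (L : ℝ))) / (L : ℝ)) ∧
    ent p F = (L : ℝ) * Real.logb 2 (Fintype.card K) ∧
    ent p R = ((τ : ℝ) - (L : ℝ)) * Real.logb 2 (Fintype.card K) ∧
    ent p R = (((τ : ℝ) - (L : ℝ)) / (L : ℝ)) * ent p F ∧
    (∀ t : Fin T, ent p (M t) = Real.logb 2 (Fintype.card K)) ∧
    (∀ t : Fin T, ent p (M t) = ent p F / (L : ℝ)) := by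
  set q : ℝ := (Fintype.card K : ℝ) with hq
  have hq1 : (1 : ℝ) < q := by
    rw [hq]
    exact_mod_cast (by omega : 1 < Fintype.card K)
  have hlog : 0 < Real.logb 2 q := Real.logb_pos (by norm_num) hq1
  have hLpos : (0 : ℝ) < L := by exact_mod_cast hL1
  set B : Ω → (Fin τ → K) := fun ω j => A j ω with hBdef
  have hB : ∀ a, prb p {ω | B ω = a} = 1 / (Fintype.card (Fin τ → K) : ℝ) := by
    intro a
    have : {ω | B ω = a} = {ω | ∀ j, A j ω = a j} := by
      ext ω
      simp [hBdef, funext_iff]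
    rw [this, hindep]
    simp [hunif, hq]
  have hF : F = fun ω => coeffMap K hLτ (B ω) := by
    funext ω j
    exact hFdef ω j
  have hM : ∀ S, shares M S = fun ω => evalMap τ x S (B ω) := by
    intro S
    funext ω t
    exact hMdef t.1 ω
  have hFM : ∀ S, (fun ω => (F ω, shares M S ω)) = fun ω => coeffEval hLτ x S (B ω) := by
    intro S
    rw [hF, hM]
    rfl
  have entF : ent p F = (L : ℝ) * Real.logb 2 q := by
    rw [hF, ent_surjective p B hB (coeffMap K hLτ)
      (Prod.fst_surjective.comp (coeffEval_surjective hLτ x hxinj hx0 ∅ (by simpa using hLτ)))]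
    simp [Real.logb_pow, hq]
  have entM : ∀ S : Finset (Fin T), S.card ≤ τ →
      ent p (shares M S) = (S.card : ℝ) * Real.logb 2 q := by
    intro S hS
    have h := ent_surjective p B hB (evalMap τ x S) (evalMap_surjective x hxinj hx0 S hS)
    rw [hM]
    refine h.trans ?_
    simp [Real.logb_pow, hq]
  have entFM_surj : ∀ S : Finset (Fin T), L + S.card ≤ τ →
      ent p (fun ω => (F ω, shares M S ω)) = ((L : ℝ) + S.card) * Real.logb 2 q := by
    intro S hS
    rw [hFM]
    refine (ent_surjective p B hB _ (coeffEval_surjective hLτ x hxinj hx0 S hS)).trans ?_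
    rw [Fintype.card_prod, Fintype.card_fun, Fintype.card_fun, ← pow_add]
    simp [Real.logb_pow, hq]
  have entFM_inj : ∀ S : Finset (Fin T), τ ≤ L + S.card →
      ent p (fun ω => (F ω, shares M S ω)) = (τ : ℝ) * Real.logb 2 q := by
    intro S hS
    rw [hFM]
    refine (ent_injective p B hB _ (coeffEval_injective hLτ x hxinj hx0 S hS)).trans ?_
    simp [Real.logb_pow, hq]
  have entR : ent p R = ((τ : ℝ) - (L : ℝ)) * Real.logb 2 q := by
    let φ : (Fin τ → K) →+ (Fin (τ - L) → K) :=
      { toFun := fun a j => a (Fin.cast (Nat.add_sub_cancel' hLτ) (Fin.natAdd L j))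
        map_zero' := rfl
        map_add' := fun _ _ => rfl }
    have hφ : Function.Surjective φ := by
      refine Function.Injective.surjective_comp_right
        (f := fun j : Fin (τ - L) => Fin.cast (Nat.add_sub_cancel' hLτ) (Fin.natAdd L j)) ?_
      intro i j hij
      simpa using hij
    have hR : R = fun ω => φ (B ω) := by
      funext ω j
      exact hRdef ω j
    rw [hR, ent_surjective p B hB φ hφ]
    simp [Real.logb_pow, hq, Nat.cast_sub hLτ]
  have entMt : ∀ t : Fin T, ent p (M t) = Real.logb 2 q := by
    intro t
    let φ : (Fin τ → K) →+ K :=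
      (Pi.evalAddMonoidHom (fun _ : ({t} : Finset (Fin T)) => K)
        ⟨t, Finset.mem_singleton_self t⟩).comp (evalMap τ x {t})
    have hφ : Function.Surjective φ :=
      (Function.surjective_eval _).comp
        (evalMap_surjective x hxinj hx0 {t} (by simp; omega))
    have hMt : M t = fun ω => φ (B ω) := by
      funext ω
      exact hMdef t ω
    rw [hMt, ent_surjective p B hB φ hφ]
  have leak : ∀ S : Finset (Fin T), S.card ≤ τ → mutInf p F (shares M S) =
      max 0 ((S.card : ℝ) - ((τ : ℝ) - (L : ℝ))) * Real.logb 2 q := by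
    intro S hS
    unfold mutInf
    rw [entF, entM S hS]
    rcases le_total (L + S.card) τ with h | h
    · have h' : (L : ℝ) + S.card ≤ τ := by exact_mod_cast h
      rw [entFM_surj S h, max_eq_left (by linarith)]
      ring
    · have h' : (τ : ℝ) ≤ L + S.card := by exact_mod_cast h
      rw [entFM_inj S h, max_eq_right (by linarith)]
      ring
  refine ⟨?_, leak, ?_, ?_, entF, entR, ?_, entMt, ?_⟩
  · intro S hS
    unfold condEnt
    rw [entFM_inj S (by omega), hM]
    have h := ent_injective p B hB _ (evalMap_injective x hxinj hx0 S hS)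
    refine sub_eq_zero.mpr (Eq.trans ?_ h.symm)
    simp [Real.logb_pow, hq]
  · intro S hS
    have h' : (L : ℝ) + S.card ≤ τ := by exact_mod_cast (by omega : L + S.card ≤ τ)
    rw [leak S (by omega), max_eq_left (by linarith), zero_mul]
  · intro S hS
    rw [leak S hS, entF, mul_div_mul_right _ _ hlog.ne']
  · rw [entR, entF]
    field_simp
  · intro t
    rw [entMt, entF]
    field_simp

end
end

section
/- (Achievability in Theorem 1, case α < z/τ.) Let T ≥ 2, τ ∈ {1,…,T}, z ∈ {1,…,τ−1}, and let α ∈ ℚ with 0 ≤ α < z/τ. Then there exist a finite probability space, a random variable F with H(F) > 0, a random variable R independent of F, and random variables M_1,…,M_T, each M_t a deterministic function of (F,R), such that: (i) H(F | M_S) = 0 for every S ⊆ {1,…,T} with |S| ≥ τ; (ii) I(F; M_S) ≤ α·H(F) for every S ⊆ {1,…,T} with |S| ≤ z; (iii) I(F; M_S)/H(F) depends only on |S| (leakage symmetry); (iv) H(M_t) = ((1−α)/(τ−z))·H(F) for every t ∈ {1,…,T}; and (v) H(R) = ((z−τα)/(τ−z))·H(F). -/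
/-!
The scheme is ramp Shamir sharing over a prime field `ZMod q`. With `α = a / b`, the file `F`
consists of `k = (τ - z) * b` uniform symbols, the randomness `R` of `r = z * b - τ * a` uniform
symbols, and these are the high and low coefficients of a polynomial of degree less than
`k + r = τ * (b - a)`. Share `t` is the list of its values at `m = b - a` points, all `T * m`
points being distinct.

Since evaluating polynomials of degree less than `d` at `n` distinct points is surjective for
`n ≤ d` and injective for `d ≤ n` (`polyEval_surj`, `polyEval_inj`), a set of `s` shares has entropy
`min (s * m) (k + r)` symbols (`ent_shares`), and jointly with `F` it has `k + min (s * m) r`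
(`ent_file_shares`). So the leakage is `min (s * m) (k + r) - min (s * m) r` symbols, which depends
only on `s`, and for `s ≤ z` is at most `z * m - r = (τ - z) * a = α * k`.
-/

open scoped BigOperators
open Classical

noncomputable section

/-- The properties required of a coding scheme achieving the optimal individual share
size and local randomness in Theorem 1 for the case `α < z/τ`: `p` is a probability
mass function, `H(F) > 0`, `R` is independent of `F`, each share is a deterministic
function of `(F, R)`, recoverability from any `τ` shares, `(α, z)`-privacy, leakage
symmetry, `H(M_t) = ((1-α)/(τ-z))·H(F)` for every `t`, and
`H(R) = ((z-τα)/(τ-z))·H(F)`. -/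
def AchievesOptimalScheme (T τ z : ℕ) (α : ℝ) (Ω : Type) [Fintype Ω] (p : Ω → ℝ)
    (𝔽 : Type) [Fintype 𝔽] (F : Ω → 𝔽) (ℛ : Type) [Fintype ℛ] (R : Ω → ℛ)
    (𝕄 : Type) [Fintype 𝕄] (M : Fin T → Ω → 𝕄) : Prop :=
  (∀ ω, 0 ≤ p ω) ∧ (∑ ω, p ω = 1) ∧ 0 < ent p F ∧
  (∀ (f : 𝔽) (r : ℛ), prb p {ω | F ω = f ∧ R ω = r} =
    prb p {ω | F ω = f} * prb p {ω | R ω = r}) ∧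
  (∀ t : Fin T, ∃ g : 𝔽 → ℛ → 𝕄, ∀ ω, M t ω = g (F ω) (R ω)) ∧
  (∀ S : Finset (Fin T), τ ≤ S.card → condEnt p F (shares M S) = 0) ∧
  (∀ S : Finset (Fin T), S.card ≤ z → mutInf p F (shares M S) ≤ α * ent p F) ∧
  (∀ t : ℕ, 1 ≤ t → t ≤ T → ∃ C : ℝ, 0 ≤ C ∧
    ∀ S : Finset (Fin T), S.card = t → mutInf p F (shares M S) = C * ent p F) ∧
  (∀ t : Fin T, ent p (M t) = ((1 - α) / ((τ : ℝ) - (z : ℝ))) * ent p F) ∧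
  ent p R = (((z : ℝ) - (τ : ℝ) * α) / ((τ : ℝ) - (z : ℝ))) * ent p F

/-! ### Entropy under the uniform distribution -/

/-- The uniform probability mass function. -/
def unif (Ω : Type) [Fintype Ω] : Ω → ℝ := fun _ => 1 / (Fintype.card Ω : ℝ)

lemma unif_sum (Ω : Type) [Fintype Ω] [Nonempty Ω] : ∑ ω, unif Ω ω = 1 := by
  simp [unif]

/-- A surjective additive map pushes the uniform distribution to the uniform distribution,
since its fibres are translates of each other. -/
lemma prb_of_surj {Ω V : Type} [Fintype Ω] [Fintype V] [AddCommGroup Ω] [AddCommGroup V]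
    (X : Ω → V) (hadd : ∀ a b, X (a + b) = X a + X b) (hX : Function.Surjective X) (v : V) :
    prb (unif Ω) {ω | X ω = v} = 1 / (Fintype.card V : ℝ) := by
  have h0 : ∀ v, prb (unif Ω) {ω | X ω = v} = prb (unif Ω) {ω | X ω = 0} := by
    intro v
    obtain ⟨ω₀, rfl⟩ := hX v
    unfold prb
    symm
    refine Fintype.sum_equiv (Equiv.addRight ω₀) _ _ fun ω => ?_
    simp [hadd, unif]
  have hs := sum_prb (unif Ω) X
  rw [unif_sum, Finset.sum_congr rfl (fun v _ => h0 v), Finset.sum_const, nsmul_eq_mul,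
    Finset.card_univ] at hs
  rw [h0 v]
  have hc : (Fintype.card V : ℝ) ≠ 0 := by
    have : 0 < Fintype.card V := Fintype.card_pos
    positivity
  field_simp
  linarith

lemma ent_of_surj {Ω V : Type} [Fintype Ω] [Fintype V] [AddCommGroup Ω] [AddCommGroup V]
    (X : Ω → V) (hadd : ∀ a b, X (a + b) = X a + X b) (hX : Function.Surjective X) :
    ent (unif Ω) X = Real.logb 2 (Fintype.card V) := by
  have hc : (Fintype.card V : ℝ) ≠ 0 := by
    have : 0 < Fintype.card V := Fintype.card_pos
    positivity
  unfold ent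
  simp only [prb_of_surj X hadd hX]
  rw [Finset.sum_const, nsmul_eq_mul, Finset.card_univ, one_div, Real.logb_inv]
  field_simp

lemma ent_of_inj {Ω V : Type} [Fintype Ω] [Fintype V] [Nonempty Ω]
    (X : Ω → V) (hX : Function.Injective X) :
    ent (unif Ω) X = Real.logb 2 (Fintype.card Ω) := by
  have hc : (Fintype.card Ω : ℝ) ≠ 0 := by
    have : 0 < Fintype.card Ω := Fintype.card_pos
    positivity
  have h1 : ∀ ω, prb (unif Ω) {ω' | X ω' = X ω} = 1 / (Fintype.card Ω : ℝ) := by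
    intro ω
    simp [prb, unif, hX.eq_iff]
  unfold ent
  rw [← Finset.sum_of_injOn (s := Finset.univ) (t := Finset.univ)
    (f := fun _ : Ω => 1 / (Fintype.card Ω : ℝ) * Real.logb 2 (1 / (Fintype.card Ω : ℝ)))
    X hX.injOn (by simp) ?_ ?_]
  · rw [Finset.sum_const, nsmul_eq_mul, Finset.card_univ, one_div, Real.logb_inv]
    field_simp
  · intro v _ hv
    have : prb (unif Ω) {ω | X ω = v} = 0 := by
      unfold prb
      refine Finset.sum_eq_zero fun ω _ => ?_
      rw [if_neg]
      intro h
      exact hv ⟨ω, by simp, h⟩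
    rw [this, zero_mul]
  · intro ω _
    rw [h1]

/-! ### Polynomial evaluation -/

/-- Evaluation of the polynomial `∑ j, c j * X ^ j` at the points `x i`. -/
def polyEval {K ι : Type} [Field K] {d : ℕ} (x : ι → K) (c : Fin d → K) : ι → K :=
  fun i => ∑ j, c j * x i ^ (j : ℕ)

lemma polyEval_add {K ι : Type} [Field K] {d : ℕ} (x : ι → K) (c c' : Fin d → K) :
    polyEval x (c + c') = polyEval x c + polyEval x c' := by
  funext i
  simp [polyEval, add_mul, Finset.sum_add_distrib]

lemma polyEval_inj {K ι : Type} [Field K] [Fintype ι] {d : ℕ} (x : ι → K)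
    (hx : Function.Injective x) (hd : d ≤ Fintype.card ι) :
    Function.Injective (polyEval (d := d) x) := by
  intro c c' h
  obtain ⟨e⟩ : Nonempty (Fin d ↪ ι) :=
    Function.Embedding.nonempty_of_card_le (by simpa using hd)
  have h0 : c - c' = 0 := by
    refine Matrix.eq_zero_of_forall_index_sum_mul_pow_eq_zero (hx.comp e.injective) fun j => ?_
    have := congrFun h (e j)
    simp only [polyEval] at this
    simp [sub_mul, Finset.sum_sub_distrib, this]
  exact sub_eq_zero.mp h0

lemma polyEval_surj {K ι : Type} [Field K] [Fintype ι] {d : ℕ} (x : ι → K)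
    (hx : Function.Injective x) (hd : Fintype.card ι ≤ d) :
    Function.Surjective (polyEval (d := d) x) := by
  intro v
  rcases Nat.eq_zero_or_pos d with rfl | hpos
  · have : IsEmpty ι := Fintype.card_eq_zero_iff.mp (by omega)
    exact ⟨0, funext fun i => this.elim i⟩
  set P := Lagrange.interpolate Finset.univ x v with hP
  have hdeg : P.degree < (d : WithBot ℕ) :=
    lt_of_lt_of_le (Lagrange.degree_interpolate_lt v hx.injOn) (by
      rw [Finset.card_univ]; exact_mod_cast hd)
  have hnat : P.natDegree < d := by
    by_cases h0 : P = 0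
    · simpa [h0] using hpos
    · exact (Polynomial.natDegree_lt_iff_degree_lt h0).mpr hdeg
  refine ⟨fun j => P.coeff j, funext fun i => ?_⟩
  rw [← Lagrange.eval_interpolate_at_node v hx.injOn (Finset.mem_univ i), ← hP,
    Polynomial.eval_eq_sum_range' hnat]
  exact Fin.sum_univ_eq_sum_range (fun j => P.coeff j * x i ^ j) d

/-! ### The coding scheme -/

/-- Share `t`: the values at the points `x (t, j)` of the polynomial whose low coefficients are
the local randomness `ω.2` and whose high coefficients are the file `ω.1`. -/
def share {K : Type} [Field K] {T m k r : ℕ} (x : Fin T × Fin m → K) (t : Fin T)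
    (ω : (Fin k → K) × (Fin r → K)) : Fin m → K :=
  fun j => polyEval x (Fin.append ω.2 ω.1) (t, j)

section Scheme

set_option linter.unusedSectionVars false

variable {K : Type} [Field K] [Fintype K] {T m k r : ℕ}

lemma share_split (x : Fin T × Fin m → K) (t : Fin T) (f : Fin k → K) (ρ : Fin r → K)
    (j : Fin m) :
    share x t (f, ρ) j = polyEval x ρ (t, j) + ∑ i, f i * x (t, j) ^ (r + (i : ℕ)) := by
  simp [share, polyEval, Fin.sum_univ_add]

lemma share_add (x : Fin T × Fin m → K) (t : Fin T) (a b : (Fin k → K) × (Fin r → K)) :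
    share x t (a + b) = share x t a + share x t b := by
  funext j
  obtain ⟨f, ρ⟩ := a
  obtain ⟨f', ρ'⟩ := b
  simp only [Prod.mk_add_mk, Pi.add_apply, share_split, polyEval_add, add_mul,
    Finset.sum_add_distrib]
  ring

/-- The evaluation points held jointly by the shares in `S`. -/
def ptsOn (x : Fin T × Fin m → K) (S : Finset (Fin T)) : S × Fin m → K :=
  fun a => x (a.1.1, a.2)

lemma ptsOn_inj {x : Fin T × Fin m → K} (hx : Function.Injective x) (S : Finset (Fin T)) :
    Function.Injective (ptsOn x S) := by
  rintro ⟨⟨a, ha⟩, i⟩ ⟨⟨b, hb⟩, j⟩ h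
  have := hx h
  simp_all

lemma card_pts (S : Finset (Fin T)) : Fintype.card (S × Fin m) = S.card * m := by
  simp

lemma logb_card_file (d : ℕ) :
    Real.logb 2 (Fintype.card (Fin d → K)) = d * Real.logb 2 (Fintype.card K) := by
  simp [Real.logb_pow]

lemma logb_card_omega :
    Real.logb 2 (Fintype.card ((Fin k → K) × (Fin r → K))) =
      ((k + r : ℕ) : ℝ) * Real.logb 2 (Fintype.card K) := by
  rw [← Real.logb_pow]
  simp [pow_add]

lemma ent_file :
    ent (unif ((Fin k → K) × (Fin r → K))) Prod.fst = k * Real.logb 2 (Fintype.card K) := by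
  rw [ent_of_surj _ (fun _ _ => rfl) Prod.fst_surjective, logb_card_file]

lemma ent_rand :
    ent (unif ((Fin k → K) × (Fin r → K))) Prod.snd = r * Real.logb 2 (Fintype.card K) := by
  rw [ent_of_surj _ (fun _ _ => rfl) Prod.snd_surjective, logb_card_file]

lemma append_surj (c : Fin (r + k) → K) :
    ∃ ω : (Fin k → K) × (Fin r → K), Fin.append ω.2 ω.1 = c :=
  ⟨(fun i => c (Fin.natAdd r i), fun i => c (Fin.castAdd k i)), Fin.append_castAdd_natAdd⟩

lemma append_inj {ω ω' : (Fin k → K) × (Fin r → K)}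
    (h : Fin.append ω.2 ω.1 = Fin.append ω'.2 ω'.1) : ω = ω' := by
  refine Prod.ext (funext fun i => ?_) (funext fun i => ?_)
  · simpa using congrFun h (Fin.natAdd r i)
  · simpa using congrFun h (Fin.castAdd k i)

lemma ent_share {x : Fin T × Fin m → K} (hx : Function.Injective x) (t : Fin T)
    (hm : m ≤ r + k) :
    ent (unif ((Fin k → K) × (Fin r → K))) (share x t) = m * Real.logb 2 (Fintype.card K) := by
  rw [ent_of_surj _ (share_add x t) ?_, logb_card_file]
  intro v
  have hx' : Function.Injective (fun j : Fin m => x (t, j)) := fun i j h => by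
    simpa using hx h
  obtain ⟨c, hc⟩ := polyEval_surj (d := r + k) _ hx' (by simpa using hm) v
  obtain ⟨ω, rfl⟩ := append_surj c
  exact ⟨ω, hc⟩

/-- Any collection of shares holds as much entropy as it has symbols, up to that of the whole
polynomial: too few points do not constrain each other, enough points determine everything. -/
lemma ent_shares {x : Fin T × Fin m → K} (hx : Function.Injective x) (S : Finset (Fin T)) :
    ent (unif ((Fin k → K) × (Fin r → K))) (shares (share x) S) =
      (min (S.card * m) (k + r) : ℕ) * Real.logb 2 (Fintype.card K) := by
  rcases le_total (S.card * m) (k + r) with h | h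
  · rw [min_eq_left h, ent_of_surj]
    · rw [← Real.logb_pow]
      congr 1
      simp [← pow_mul, mul_comm]
    · intro a b
      funext t
      exact share_add x t.1 a b
    · intro v
      obtain ⟨c, hc⟩ := polyEval_surj (d := r + k) _ (ptsOn_inj hx S)
        (by rw [card_pts]; omega) (fun a => v a.1 a.2)
      obtain ⟨ω, rfl⟩ := append_surj c
      exact ⟨ω, funext fun t => funext fun j => congrFun hc (t, j)⟩
  · rw [min_eq_right h, ent_of_inj, logb_card_omega]
    intro ω ω' hω
    refine append_inj (polyEval_inj (ptsOn x S) (ptsOn_inj hx S) (by rw [card_pts]; omega) ?_)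
    funext a
    exact congrFun (congrFun hω a.1) a.2

/-- Once the file is known, the shares evaluate a polynomial with only the `r` random
coefficients, so the entropy they add saturates at `r` symbols. -/
lemma ent_file_shares {x : Fin T × Fin m → K} (hx : Function.Injective x)
    (S : Finset (Fin T)) :
    ent (unif ((Fin k → K) × (Fin r → K))) (fun ω => (ω.1, shares (share x) S ω)) =
      (k + min (S.card * m) r : ℕ) * Real.logb 2 (Fintype.card K) := by
  rcases le_total (S.card * m) r with h | h
  · rw [min_eq_left h, ent_of_surj]
    · rw [← Real.logb_pow]
      congr 1
      simp [pow_add, ← pow_mul, mul_comm]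
    · intro a b
      refine Prod.ext rfl (funext fun t => ?_)
      exact share_add x t.1 a b
    · rintro ⟨f, v⟩
      obtain ⟨ρ, hρ⟩ := polyEval_surj (d := r) _ (ptsOn_inj hx S)
        (by rw [card_pts]; omega)
        (fun a => v a.1 a.2 - ∑ i, f i * x (a.1.1, a.2) ^ (r + (i : ℕ)))
      refine ⟨(f, ρ), Prod.ext rfl (funext fun t => funext fun j => ?_)⟩
      have := congrFun hρ (t, j)
      change share x t.1 (f, ρ) j = v t j
      rw [share_split]
      change polyEval x ρ (t.1, j) = _ at this
      rw [this]
      simp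
  · rw [min_eq_right h, ent_of_inj, logb_card_omega]
    rintro ⟨f, ρ⟩ ⟨f', ρ'⟩ hω
    obtain ⟨hf, hs⟩ := Prod.mk.inj hω
    dsimp only at hf
    subst hf
    refine Prod.ext rfl
      (polyEval_inj (ptsOn x S) (ptsOn_inj hx S) (by rw [card_pts]; omega) ?_)
    funext a
    have h2 : share x a.1.1 (f, ρ) a.2 = share x a.1.1 (f, ρ') a.2 :=
      congrFun (congrFun hs a.1) a.2
    rw [share_split, share_split] at h2
    exact add_right_cancel h2

lemma mutInf_shares {x : Fin T × Fin m → K} (hx : Function.Injective x) (S : Finset (Fin T)) :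
    mutInf (unif ((Fin k → K) × (Fin r → K))) Prod.fst (shares (share x) S) =
      ((min (S.card * m) (k + r) : ℕ) - (min (S.card * m) r : ℕ) : ℝ) *
        Real.logb 2 (Fintype.card K) := by
  unfold mutInf
  rw [ent_file, ent_shares hx, ent_file_shares hx]
  push_cast
  ring

end Scheme

lemma prb_indep {A B : Type} [Fintype A] [Fintype B] [AddCommGroup A] [AddCommGroup B]
    (a : A) (b : B) :
    prb (unif (A × B)) {ω | ω.1 = a ∧ ω.2 = b} =
      prb (unif (A × B)) {ω | ω.1 = a} * prb (unif (A × B)) {ω | ω.2 = b} := by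
  rw [prb_of_surj Prod.fst (fun _ _ => rfl) Prod.fst_surjective,
    prb_of_surj Prod.snd (fun _ _ => rfl) Prod.snd_surjective]
  have h : {ω : A × B | ω.1 = a ∧ ω.2 = b} = {ω | id ω = (a, b)} := by
    ext ω
    simp [Prod.ext_iff]
  rw [h, prb_of_surj id (fun _ _ => rfl) Function.surjective_id, Fintype.card_prod]
  push_cast
  rw [one_div_mul_one_div]

/-- Achievability in Theorem 1, case `α < z/τ`: there exists a finite
coding scheme with the optimal individual share sizes and amount of local
randomness. -/
theorem achievability_small_alpha
    (T τ z : ℕ) (hT : 2 ≤ T) (hτ1 : 1 ≤ τ) (hτT : τ ≤ T) (hz1 : 1 ≤ z) (hzτ : z < τ)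
    (α : ℚ) (hα0 : 0 ≤ (α : ℝ)) (hα : (α : ℝ) < (z : ℝ) / (τ : ℝ)) :
    ∃ (Ω : Type) (iΩ : Fintype Ω) (p : Ω → ℝ)
      (𝔽 : Type) (i𝔽 : Fintype 𝔽) (F : Ω → 𝔽)
      (ℛ : Type) (iℛ : Fintype ℛ) (R : Ω → ℛ)
      (𝕄 : Type) (i𝕄 : Fintype 𝕄) (M : Fin T → Ω → 𝕄),
      @AchievesOptimalScheme T τ z (α : ℝ) Ω iΩ p 𝔽 i𝔽 F ℛ iℛ R 𝕄 i𝕄 M := by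
  have hτpos : (0 : ℝ) < τ := by exact_mod_cast hτ1
  -- Write `α = a / b`; the file has `(τ - z) * b` symbols, a share `b - a`, and the
  -- local randomness `z * b - τ * a`.
  have hα0' : 0 ≤ α := by exact_mod_cast hα0
  obtain ⟨a, b, hb, hαab⟩ : ∃ a b : ℕ, 0 < b ∧ (α : ℝ) = a / b := by
    refine ⟨α.num.toNat, α.den, α.den_pos, ?_⟩
    have h1 : ((α.num.toNat : ℤ) : ℝ) = (α.num : ℝ) := by
      rw [Int.toNat_of_nonneg (Rat.num_nonneg.mpr hα0')]
    rw [Rat.cast_def, ← h1, Int.cast_natCast]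
  have hbpos : (0 : ℝ) < b := by exact_mod_cast hb
  have hlt : a * τ < z * b := by
    rw [hαab, div_lt_div_iff₀ hbpos hτpos] at hα
    exact_mod_cast hα
  have hab : a < b := by
    by_contra hcon
    have h1 : z * b ≤ τ * a := Nat.mul_le_mul hzτ.le (not_lt.mp hcon)
    rw [mul_comm τ a] at h1
    omega
  obtain ⟨m, rfl⟩ : ∃ m, b = a + m := ⟨b - a, by omega⟩
  obtain ⟨u, rfl⟩ : ∃ u, τ = z + u := ⟨τ - z, by omega⟩
  obtain ⟨r, hr⟩ : ∃ r, z * (a + m) = a * (z + u) + r :=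
    ⟨z * (a + m) - a * (z + u), by omega⟩
  have hm : 0 < m := by omega
  have hu : 0 < u := by omega
  set k := u * (a + m) with hk
  have hkpos : 0 < k := by positivity
  have hkr : k + r = (z + u) * m := by
    rw [hk]; nlinarith
  have hzm : z * m = a * u + r := by nlinarith
  obtain ⟨q, hq, hprime⟩ := Nat.exists_infinite_primes (T * m)
  have : Fact q.Prime := ⟨hprime⟩
  obtain ⟨x⟩ : Nonempty (Fin T × Fin m ↪ ZMod q) :=
    Function.Embedding.nonempty_of_card_le (by simpa [ZMod.card] using hq)
  have hx := x.injective
  have hL : 0 < Real.logb 2 (Fintype.card (ZMod q)) := by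
    rw [ZMod.card]
    exact Real.logb_pos (by norm_num) (by exact_mod_cast hprime.one_lt)
  have hkR : (k : ℝ) = u * (a + m) := by rw [hk]; push_cast; ring
  have huR : (0 : ℝ) < u := by exact_mod_cast hu
  have hkposR : (0 : ℝ) < k := by exact_mod_cast hkpos
  have hαk : (α : ℝ) * k = u * a := by
    rw [hαab, hkR]
    push_cast at hbpos ⊢
    field_simp
  have hden : ((z + u : ℕ) : ℝ) - z = u := by push_cast; ring
  refine ⟨(Fin k → ZMod q) × (Fin r → ZMod q), inferInstance, unif _,
    Fin k → ZMod q, inferInstance, Prod.fst, Fin r → ZMod q, inferInstance, Prod.snd,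
    Fin m → ZMod q, inferInstance, share x, ?_, unif_sum _, ?_, prb_indep, ?_, ?_, ?_, ?_, ?_, ?_⟩
  · intro ω
    unfold unif
    positivity
  · rw [ent_file]
    positivity
  · exact fun t => ⟨fun f ρ => share x t (f, ρ), fun ω => rfl⟩
  · intro S hS
    have h1 : (z + u) * m ≤ S.card * m := Nat.mul_le_mul_right m hS
    unfold condEnt
    rw [ent_file_shares hx, ent_shares hx, min_eq_right (by omega), min_eq_right (by omega),
      sub_self]
  · intro S hS
    rw [mutInf_shares hx, ent_file, ← mul_assoc, hαk]
    refine mul_le_mul_of_nonneg_right ?_ hL.le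
    have h1 : S.card * m ≤ z * m := Nat.mul_le_mul_right m hS
    have h2 : min (S.card * m) (k + r) ≤ u * a + min (S.card * m) r := by
      rw [mul_comm u a]; omega
    have h3 : ((min (S.card * m) (k + r) : ℕ) : ℝ) ≤ u * a + (min (S.card * m) r : ℕ) := by
      exact_mod_cast h2
    linarith
  · intro t _ _
    refine ⟨((min (t * m) (k + r) : ℕ) - (min (t * m) r : ℕ) : ℝ) / k, ?_, ?_⟩
    · refine div_nonneg (sub_nonneg.mpr ?_) hkposR.le
      have : min (t * m) r ≤ min (t * m) (k + r) := by omega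
      exact_mod_cast this
    · intro S hS
      rw [mutInf_shares hx, ent_file, hS]
      field_simp
  · intro t
    have h1 : m ≤ (z + u) * m := Nat.le_mul_of_pos_left m (by omega)
    rw [ent_share hx t (by omega), ent_file, hden, ← mul_assoc]
    congr 1
    have : ((1 : ℝ) - α) * k = u * m := by rw [sub_mul, hαk, hkR]; ring
    rw [div_mul_eq_mul_div, this]
    field_simp
  · rw [ent_rand, ent_file, hden, ← mul_assoc]
    congr 1
    have hrR : (z : ℝ) * (a + m) = a * (z + u) + r := by exact_mod_cast hr
    have : ((z : ℝ) - ((z + u : ℕ) : ℝ) * α) * k = u * r := by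
      rw [sub_mul, mul_assoc, hαk, hkR]
      push_cast
      linear_combination (u : ℝ) * hrR
    rw [div_mul_eq_mul_div, this]
    field_simp

end
end
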